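/- Let k ≥ l ≥ m ≥ 1 be integers with l ≥ 2 and parameters a₁ = k/(2(k+l+m−2)), a₂ = l/(2(k+l+m−2)), a₃ = m/(2(k+l+m−2)). If G(k,l,m) < 0, then the set of Einstein solutions normalized by x₁+x₂+x₃ = 1 has exactly 4 elements; if G(k,l,m) > 0, then it has exactly 2 elements. Equivalently, SO(k+l+m)/SO(k)×SO(l)×SO(m) admits four (respectively, two) invariant Einstein metrics up to homothety when G(k,l,m) < 0 (respectively, G(k,l,m) > 0). -/

import Mathlib

/-! The equations say that the three quantities
`E₁ = x₂x₃ + a₁(x₁² - x₂² - x₃²)`, and cyclically `E₂`, `E₃`, coincide.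

For `0 < aᵢ < 1/2`, every nonzero real solution has three nonzero coordinates of one sign
(`same_sign`), so counting metrics amounts to counting real projective intersections of two conics.

If `a₁ ≠ a₂`, the conic `E₁ = E₂` is `(x₂ - x₁)(x₃ - (a₁ + a₂)(x₁ + x₂)) = (a₁ - a₂) x₃²`, which is
parametrized by `t = x₃ / (x₂ - x₁)`. On it, `E₂ - E₃` becomes a quartic
`F` in `t` with negative leading coefficient and positive value at `0`, hence with a positive and a
negative real root. Its discriminant is `-16 (a₁ + a₂)⁴ (a₁ - a₂)² Q` (`quartic_disc_eq`). Dividing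
out the two known roots leaves a real quadratic whose discriminant has the sign of that of `F`, so
`F` has exactly four real roots if `Q < 0` and exactly two if `Q > 0` (`quartic_roots`).

A cyclic permutation brings any triple with two different parameters to this situation. For
`a₁ = a₂ = a₃ = a` the conics split into lines, the solutions are `(1, 1, 1)` and the permutations of
`(2a, 2a, 1 - 2a)`, and `Q = -(1 + 2a)⁴(1 - 4a)⁸`. -/

noncomputable section

/-- The pair of Einstein equations together with positivity of the metric components. -/
def isEinstein (a₁ a₂ a₃ x₁ x₂ x₃ : ℝ) : Prop :=
  0 < x₁ ∧ 0 < x₂ ∧ 0 < x₃ ∧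
  (a₂ + a₃) * (a₁ * x₂ ^ 2 + a₁ * x₃ ^ 2 - x₂ * x₃) + (a₂ * x₂ + a₃ * x₃) * x₁
    - (a₁ * a₂ + a₁ * a₃ + 2 * a₂ * a₃) * x₁ ^ 2 = 0 ∧
  (a₁ + a₃) * (a₂ * x₁ ^ 2 + a₂ * x₃ ^ 2 - x₁ * x₃) + (a₁ * x₁ + a₃ * x₃) * x₂
    - (a₁ * a₂ + 2 * a₁ * a₃ + a₂ * a₃) * x₂ ^ 2 = 0

/-- Einstein solutions normalized by `x₁ + x₂ + x₃ = 1`. -/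
def normalizedEinstein (a₁ a₂ a₃ : ℝ) : Set (ℝ × ℝ × ℝ) :=
  {x | isEinstein a₁ a₂ a₃ x.1 x.2.1 x.2.2 ∧ x.1 + x.2.1 + x.2.2 = 1}

/-- The symmetric polynomial `Q` in the elementary symmetric functions of `a₁, a₂, a₃`. -/
def Qpoly (a₁ a₂ a₃ : ℝ) : ℝ :=
  let s₁ := a₁ + a₂ + a₃
  let s₂ := a₁ * a₂ + a₁ * a₃ + a₂ * a₃
  let s₃ := a₁ * a₂ * a₃
  (2 * s₁ + 4 * s₃ - 1) * (64 * s₁ ^ 5 - 64 * s₁ ^ 4 + 8 * s₁ ^ 3 + 12 * s₁ ^ 2 - 6 * s₁ + 1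
      + 240 * s₃ * s₁ ^ 2 - 240 * s₃ * s₁ - 1536 * s₃ ^ 2 * s₁ - 4096 * s₃ ^ 3 + 60 * s₃
      + 768 * s₃ ^ 2)
    - 8 * s₁ * (2 * s₁ + 4 * s₃ - 1) * (2 * s₁ - 32 * s₃ - 1) * (10 * s₁ + 32 * s₃ - 5) * s₂
    - 16 * s₁ ^ 2 * (13 - 52 * s₁ + 640 * s₃ * s₁ + 1024 * s₃ ^ 2 - 320 * s₃ + 52 * s₁ ^ 2)
      * s₂ ^ 2
    + 64 * (2 * s₁ - 1) * (2 * s₁ - 32 * s₃ - 1) * s₂ ^ 3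
    + 2048 * s₁ * (2 * s₁ - 1) * s₂ ^ 4

/-- The surface `Ω = {Q = 0}` in `ℝ³`. -/
def OmegaSet : Set (ℝ × ℝ × ℝ) := {p | Qpoly p.1 p.2.1 p.2.2 = 0}

/-- The open cube `(0, 1/2)³`. -/
def cube : Set (ℝ × ℝ × ℝ) :=
  {p | p.1 ∈ Set.Ioo (0 : ℝ) (1 / 2) ∧ p.2.1 ∈ Set.Ioo (0 : ℝ) (1 / 2) ∧
    p.2.2 ∈ Set.Ioo (0 : ℝ) (1 / 2)}

/-- `O₁`: the connected component of `(0,1/2)³ \ Ω` containing `(1/6, 1/6, 1/6)`. -/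
def O₁ : Set (ℝ × ℝ × ℝ) := connectedComponentIn (cube \ OmegaSet) (1 / 6, 1 / 6, 1 / 6)

/-- `O₃`: the connected component of `(0,1/2)³ \ Ω` containing `(1/6, 1/4, 1/3)`. -/
def O₃ : Set (ℝ × ℝ × ℝ) := connectedComponentIn (cube \ OmegaSet) (1 / 6, 1 / 4, 1 / 3)

/-- The polynomial `G(k,l,m) = 2¹² (k+l+m-2)¹² Q(a₁,a₂,a₃)`. -/
def Gpoly (k l m : ℕ) : ℝ :=
  2 ^ 12 * ((k : ℝ) + l + m - 2) ^ 12 *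
    Qpoly ((k : ℝ) / (2 * ((k : ℝ) + l + m - 2))) ((l : ℝ) / (2 * ((k : ℝ) + l + m - 2)))
      ((m : ℝ) / (2 * ((k : ℝ) + l + m - 2)))

/-! ### The Einstein equations as equality of three quadratic forms -/

/-- `E₁` in terms of its own parameter `a` and variable `x` and the other two variables `y`, `z`;
the Einstein equations say that the three such expressions agree. -/
def ricciTerm (a x y z : ℝ) : ℝ := y * z + a * (x ^ 2 - y ^ 2 - z ^ 2)

theorem isEinstein_iff {a b c x y z : ℝ} (ha : 0 < a) (hb : 0 < b) (hc : 0 < c) :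
    isEinstein a b c x y z ↔ 0 < x ∧ 0 < y ∧ 0 < z ∧
      ricciTerm a x y z = ricciTerm b y x z ∧ ricciTerm b y x z = ricciTerm c z x y := by
  unfold isEinstein ricciTerm
  constructor
  · rintro ⟨hx, hy, hz, h1, h2⟩
    have hK : 0 < a * b + a * c + b * c := by positivity
    have h3 : (a * b + a * c + b * c) *
        ((y * z + a * (x ^ 2 - y ^ 2 - z ^ 2)) - (x * z + b * (y ^ 2 - x ^ 2 - z ^ 2))) = 0 := by
      linear_combination (-a) * h1 + b * h2
    have h4 : (a * b + a * c + b * c) *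
        ((x * z + b * (y ^ 2 - x ^ 2 - z ^ 2)) - (x * y + c * (z ^ 2 - x ^ 2 - y ^ 2))) = 0 := by
      linear_combination (-c) * h1 - (b + c) * h2
    have h5 := (mul_eq_zero.1 h3).resolve_left hK.ne'
    have h6 := (mul_eq_zero.1 h4).resolve_left hK.ne'
    exact ⟨hx, hy, hz, by linarith, by linarith⟩
  · rintro ⟨hx, hy, hz, h1, h2⟩
    refine ⟨hx, hy, hz, ?_, ?_⟩
    · linear_combination (-(b + c)) * h1 - b * h2
    · linear_combination c * h1 - a * h2

/-! ### The quartic and its discriminant -/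

/-- The quartic in `t` obtained by evaluating `E₂ - E₃` at the point `conicPt a b t` of the conic
`E₁ = E₂`. -/
def quarticF (a b c t : ℝ) : ℝ :=
  (2 * c - 1) * (a - b) ^ 2 * t ^ 4 + 2 * (a - b) * (1 - 2 * c - (a + b)) * t ^ 3
    + (2 * (a + b) - 4 * b * (a + b) * (a - b) - 4 * b * (a + b) ^ 2 - 4 * c * (a + b) ^ 2
        + 2 * c - 1) * t ^ 2
    + (-2 * (a + b) * (a - b)) * t + (a + b) ^ 2 * (1 + 2 * c)

/-- The discriminant of `A t⁴ + B t³ + C t² + D t + E`. -/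
def quarticDisc (A B C D E : ℝ) : ℝ :=
  256 * A ^ 3 * E ^ 3 - 192 * A ^ 2 * B * D * E ^ 2 - 128 * A ^ 2 * C ^ 2 * E ^ 2
    + 144 * A ^ 2 * C * D ^ 2 * E - 27 * A ^ 2 * D ^ 4 + 144 * A * B ^ 2 * C * E ^ 2
    - 6 * A * B ^ 2 * D ^ 2 * E - 80 * A * B * C ^ 2 * D * E + 18 * A * B * C * D ^ 3
    + 16 * A * C ^ 4 * E - 4 * A * C ^ 3 * D ^ 2 - 27 * B ^ 4 * E ^ 2 + 18 * B ^ 3 * C * D * E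
    - 4 * B ^ 3 * D ^ 3 - 4 * B ^ 2 * C ^ 3 * E + B ^ 2 * C ^ 2 * D ^ 2

/-- The discriminant of `quarticF a b c` is a negative multiple of `Q` when `a ≠ b` and `a + b ≠ 0`. -/
theorem quartic_disc_eq (a b c : ℝ) :
    quarticDisc ((2 * c - 1) * (a - b) ^ 2) (2 * (a - b) * (1 - 2 * c - (a + b)))
      (2 * (a + b) - 4 * b * (a + b) * (a - b) - 4 * b * (a + b) ^ 2 - 4 * c * (a + b) ^ 2
        + 2 * c - 1) (-2 * (a + b) * (a - b)) ((a + b) ^ 2 * (1 + 2 * c))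
      = -16 * (a + b) ^ 4 * (a - b) ^ 2 * Qpoly a b c := by
  -- sum and difference of `a`, `b` keep the expansion short
  obtain ⟨s, hs⟩ : ∃ s, a + b = s := ⟨_, rfl⟩
  obtain ⟨d, hd⟩ : ∃ d, a - b = d := ⟨_, rfl⟩
  obtain rfl : a = (s + d) / 2 := by linarith
  obtain rfl : b = (s - d) / 2 := by linarith
  rw [hs, hd]
  unfold quarticDisc Qpoly
  ring

/-- A real quartic with negative leading coefficient and positive constant term has exactly four
real roots if its discriminant is positive, and exactly two if it is negative. -/
theorem quartic_roots {A B C D E : ℝ} (hA : A < 0) (hE : 0 < E) :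
    (0 < quarticDisc A B C D E →
      {t : ℝ | A * t ^ 4 + B * t ^ 3 + C * t ^ 2 + D * t + E = 0}.ncard = 4) ∧
    (quarticDisc A B C D E < 0 →
      {t : ℝ | A * t ^ 4 + B * t ^ 3 + C * t ^ 2 + D * t + E = 0}.ncard = 2) := by
  have hcont : Continuous fun t : ℝ => A * t ^ 4 + B * t ^ 3 + C * t ^ 2 + D * t + E := by
    fun_prop
  -- at `|t| = M` the leading term dominates
  obtain ⟨M, hM, hMp, hMn⟩ : ∃ M : ℝ, 0 < M ∧
      A * M ^ 4 + B * M ^ 3 + C * M ^ 2 + D * M + E < 0 ∧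
      A * (-M) ^ 4 + B * (-M) ^ 3 + C * (-M) ^ 2 + D * (-M) + E < 0 := by
    set S : ℝ := |B| + |C| + |D| + E with hS
    have hS0 : 0 ≤ S := by positivity
    refine ⟨1 + S / (-A), by have := neg_pos.2 hA; positivity, ?_⟩
    have hA' := neg_pos.2 hA
    set M : ℝ := 1 + S / (-A) with hMdef
    have hM1 : 1 ≤ M := by have : 0 ≤ S / (-A) := by positivity
                           linarith
    have hAM : A * M = A - S := by rw [hMdef]; have := hA.ne; field_simp; ring
    have hM3 : 0 < M ^ 3 := by positivity
    have e1 : A * M ^ 4 = (A - S) * M ^ 3 := by rw [← hAM]; ring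
    have p2 : M ^ 2 ≤ M ^ 3 := pow_le_pow_right₀ hM1 (by norm_num)
    have p1 : M ≤ M ^ 3 := by simpa using pow_le_pow_right₀ hM1 (show 1 ≤ 3 by norm_num)
    have p0 : 1 ≤ M ^ 3 := one_le_pow₀ hM1
    have bd : ∀ u v : ℝ, |v| ≤ M ^ 3 → u * v ≤ |u| * M ^ 3 := fun u v hv =>
      (le_abs_self _).trans (by rw [abs_mul]; gcongr)
    have b3 : |M ^ 3| ≤ M ^ 3 := (abs_of_pos hM3).le
    have b2 : |M ^ 2| ≤ M ^ 3 := by rw [abs_of_nonneg (by positivity)]; exact p2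
    have b1 : |M| ≤ M ^ 3 := by rw [abs_of_nonneg (by linarith)]; exact p1
    have hEM : E ≤ E * M ^ 3 := le_mul_of_one_le_right hE.le p0
    have hAM3 : A * M ^ 3 < 0 := mul_neg_of_neg_of_pos hA hM3
    constructor
    · have := bd B _ b3
      have := bd C _ b2
      have := bd D _ b1
      rw [e1, hS]; linarith
    · have := bd B (-M ^ 3) (by rw [abs_neg]; exact b3)
      have := bd C _ b2
      have := bd D (-M) (by rw [abs_neg]; exact b1)
      have e : A * (-M) ^ 4 + B * (-M) ^ 3 + C * (-M) ^ 2 + D * (-M) + E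
          = A * M ^ 4 + B * (-M ^ 3) + C * M ^ 2 + D * (-M) + E := by ring
      rw [e, e1, hS]; linarith
  obtain ⟨t₁, ⟨ht₁, -⟩, h₁⟩ := intermediate_value_Ioo' hM.le hcont.continuousOn
    (show (0 : ℝ) ∈ Set.Ioo _ _ from ⟨hMp, by simpa using hE⟩)
  obtain ⟨t₂, ⟨-, ht₂⟩, h₂⟩ := intermediate_value_Ioo (neg_nonpos.2 hM.le) hcont.continuousOn
    (show (0 : ℝ) ∈ Set.Ioo _ _ from ⟨hMn, by simpa using hE⟩)
  simp only at h₁ h₂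
  have hne : t₁ - t₂ ≠ 0 := by linarith
  -- the quotient of the quartic by `(t - t₁) (t - t₂)` is `A t² + P t + R`
  obtain ⟨P, hP⟩ : ∃ P, P = B + A * (t₁ + t₂) := ⟨_, rfl⟩
  obtain ⟨R, hR⟩ : ∃ R, R = C + B * (t₁ + t₂) + A * (t₁ ^ 2 + t₁ * t₂ + t₂ ^ 2) := ⟨_, rfl⟩
  have hB : B = P - A * (t₁ + t₂) := by linarith
  have hC : C = R - P * (t₁ + t₂) + A * (t₁ * t₂) := by rw [hR, hP]; ring
  have hD : D = P * (t₁ * t₂) - R * (t₁ + t₂) := by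
    apply mul_left_cancel₀ hne
    rw [hB, hC] at h₁ h₂
    linear_combination h₁ - h₂
  have hE' : E = R * (t₁ * t₂) := by
    rw [hB, hC, hD] at h₁
    linear_combination h₁
  have hfac : ∀ t, A * t ^ 4 + B * t ^ 3 + C * t ^ 2 + D * t + E
      = (t - t₁) * (t - t₂) * (A * t ^ 2 + P * t + R) := by
    intro t; rw [hB, hC, hD, hE']; ring
  have hdisc : quarticDisc A B C D E = (P ^ 2 - 4 * A * R) *
      ((t₁ - t₂) * (A * t₁ ^ 2 + P * t₁ + R) * (A * t₂ ^ 2 + P * t₂ + R)) ^ 2 := by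
    rw [hB, hC, hD, hE']; unfold quarticDisc; ring
  constructor
  · intro hpos
    rw [hdisc] at hpos
    have hq : 0 < P ^ 2 - 4 * A * R := pos_of_mul_pos_left hpos (sq_nonneg _)
    have hn : (t₁ - t₂) * (A * t₁ ^ 2 + P * t₁ + R) * (A * t₂ ^ 2 + P * t₂ + R) ≠ 0 := by
      intro h; rw [h] at hpos; simp at hpos
    obtain ⟨hn', hn2⟩ := mul_ne_zero_iff.1 hn
    obtain ⟨-, hn1⟩ := mul_ne_zero_iff.1 hn'
    obtain ⟨r, hr⟩ : ∃ r, r = √(P ^ 2 - 4 * A * R) := ⟨_, rfl⟩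
    have hr0 : 0 < r := hr ▸ Real.sqrt_pos.2 hq
    have hr2 : r ^ 2 = P ^ 2 - 4 * A * R := hr ▸ Real.sq_sqrt hq.le
    have hquad : ∀ t, A * t ^ 2 + P * t + R = 0 ↔
        t = (-P + r) / (2 * A) ∨ t = (-P - r) / (2 * A) := by
      intro t
      rw [show A * t ^ 2 + P * t + R = A * (t * t) + P * t + R by ring]
      exact quadratic_eq_zero_iff hA.ne (by unfold discrim; rw [← hr2]; ring) t
    obtain ⟨u, hu⟩ : ∃ u, u = (-P + r) / (2 * A) := ⟨_, rfl⟩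
    obtain ⟨v, hv⟩ : ∃ v, v = (-P - r) / (2 * A) := ⟨_, rfl⟩
    rw [← hu, ← hv] at hquad
    have huv : u ≠ v := by
      rw [hu, hv]
      intro h
      rw [div_left_inj' (by linarith)] at h
      linarith
    have hset : {t : ℝ | A * t ^ 4 + B * t ^ 3 + C * t ^ 2 + D * t + E = 0}
        = (({t₁, t₂, u, v} : Finset ℝ) : Set ℝ) := by
      ext t
      simp only [Set.mem_ofPred_eq, hfac, mul_eq_zero, sub_eq_zero, hquad, Finset.coe_insert,
        Finset.coe_singleton, Set.mem_insert_iff, Set.mem_singleton_iff, or_assoc]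
    have h1u : t₁ ≠ u := fun h => hn1 ((hquad _).2 (Or.inl h))
    have h1v : t₁ ≠ v := fun h => hn1 ((hquad _).2 (Or.inr h))
    have h2u : t₂ ≠ u := fun h => hn2 ((hquad _).2 (Or.inl h))
    have h2v : t₂ ≠ v := fun h => hn2 ((hquad _).2 (Or.inr h))
    rw [hset, Set.ncard_coe_finset, Finset.card_insert_of_notMem, Finset.card_insert_of_notMem,
      Finset.card_pair huv]
    · simp only [Finset.mem_insert, Finset.mem_singleton, not_or]
      exact ⟨h2u, h2v⟩
    · simp only [Finset.mem_insert, Finset.mem_singleton, not_or]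
      exact ⟨sub_ne_zero.1 hne, h1u, h1v⟩
  · intro hneg
    rw [hdisc] at hneg
    have hq : P ^ 2 - 4 * A * R < 0 := by
      by_contra! h
      exact absurd hneg (not_lt.2 (mul_nonneg h (sq_nonneg _)))
    have hquad : ∀ t, A * t ^ 2 + P * t + R ≠ 0 := by
      intro t ht
      have h : (2 * A * t + P) ^ 2 = P ^ 2 - 4 * A * R := by linear_combination 4 * A * ht
      exact absurd (sq_nonneg (2 * A * t + P)) (by rw [h]; exact not_le.2 hq)
    have hset : {t : ℝ | A * t ^ 4 + B * t ^ 3 + C * t ^ 2 + D * t + E = 0} = {t₁, t₂} := by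
      ext t
      simp only [Set.mem_ofPred_eq, hfac, mul_eq_zero, sub_eq_zero, hquad, or_false,
        Set.mem_insert_iff, Set.mem_singleton_iff]
    rw [hset, Set.ncard_pair (sub_ne_zero.1 hne)]

/-! ### Signs of real solutions -/

theorem ricciTerm_swap (a x y z : ℝ) : ricciTerm a x z y = ricciTerm a x y z := by
  unfold ricciTerm; ring

/-- No solution has a zero coordinate: if `x = 0`, then `y² = z²` and `y z = 2 a y²`, which forces
`y = z = 0` because `|2 a| < 1`. -/
theorem coord_ne_zero {a b c x y z : ℝ} (ha : 0 < a) (ha' : a < 1 / 2) (hb : 0 < b) (hc : 0 < c)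
    (h1 : ricciTerm a x y z = ricciTerm b y x z) (h2 : ricciTerm b y x z = ricciTerm c z x y)
    (hx : x = 0) : y = 0 ∧ z = 0 := by
  subst hx
  unfold ricciTerm at h1 h2
  have h3 : (b + c) * (y ^ 2 - z ^ 2) = 0 := by linear_combination h2
  have h4 : y ^ 2 = z ^ 2 := by
    have := (mul_eq_zero.1 h3).resolve_left (by positivity)
    linarith
  have h5 : y * z = 2 * a * y ^ 2 := by
    have : b * (y ^ 2 - z ^ 2) = 0 := by rw [h4]; ring
    linear_combination h1 + this - a * h4
  have h6 : (1 - 4 * a ^ 2) * (y ^ 2) ^ 2 = 0 := by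
    linear_combination (y * z + 2 * a * y ^ 2) * h5 + y ^ 2 * h4
  have h7 : y ^ 2 = 0 := by
    have h8 : 1 - 4 * a ^ 2 ≠ 0 := by nlinarith
    exact pow_eq_zero_iff (two_ne_zero) |>.1 ((mul_eq_zero.1 h6).resolve_left h8)
  exact ⟨pow_eq_zero_iff two_ne_zero |>.1 h7, pow_eq_zero_iff two_ne_zero |>.1 (h4 ▸ h7)⟩

/-- `not_mixed` under the extra assumption `z ≤ y`. The equation `E₂ = E₃` forces
`y² < x² + z²`, while `E₁ = E₂` then forces `y > z + |x|`. -/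
theorem not_mixed_aux {a b c x y z : ℝ} (ha : 0 < a) (ha' : a < 1 / 2) (hb : 0 < b) (hc : 0 < c)
    (hx : x < 0) (hy : 0 < y) (hz : 0 < z) (hzy : z ≤ y)
    (h1 : ricciTerm a x y z = ricciTerm b y x z) (h2 : ricciTerm b y x z = ricciTerm c z x y) :
    False := by
  unfold ricciTerm at h1 h2
  have hxz : x * z < 0 := mul_neg_of_neg_of_pos hx hz
  have hxy : x * y < 0 := mul_neg_of_neg_of_pos hx hy
  have h3 : b * (y ^ 2 - x ^ 2 - z ^ 2) + c * (y ^ 2 + x ^ 2 - z ^ 2) = x * (y - z) := by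
    linear_combination h2
  have h4 : x * (y - z) ≤ 0 := mul_nonpos_of_nonpos_of_nonneg hx.le (by linarith)
  have h5 : 0 < c * (y ^ 2 + x ^ 2 - z ^ 2) := mul_pos hc (by nlinarith)
  -- hence `y² < x² + z²`; but `h7`, `h8` and `a < 1 / 2` give `(y - z)² > x²`, so `y > z + |x|`
  have h6 : y ^ 2 - x ^ 2 - z ^ 2 < 0 := by
    by_contra! h
    nlinarith [mul_nonneg hb.le h]
  have h7 : y * z < a * (y ^ 2 + z ^ 2 - x ^ 2) := by
    nlinarith [mul_neg_of_pos_of_neg hb h6]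
  have h8 : 0 < y ^ 2 + z ^ 2 - x ^ 2 := by
    by_contra! h
    nlinarith [mul_pos hy hz]
  nlinarith

/-- No solution has exactly one negative coordinate. -/
theorem not_mixed {a b c x y z : ℝ} (ha : 0 < a) (ha' : a < 1 / 2) (hb : 0 < b) (hc : 0 < c)
    (hx : x < 0) (hy : 0 < y) (hz : 0 < z)
    (h1 : ricciTerm a x y z = ricciTerm b y x z) (h2 : ricciTerm b y x z = ricciTerm c z x y) :
    False := by
  rcases le_total z y with h | h
  · exact not_mixed_aux ha ha' hb hc hx hy hz h h1 h2
  · exact not_mixed_aux ha ha' hc hb hx hz hy h (by rw [ricciTerm_swap, h1, h2]) h2.symm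

theorem same_sign {a b c x y z : ℝ} (ha : 0 < a) (ha' : a < 1 / 2) (hb : 0 < b) (hb' : b < 1 / 2)
    (hc : 0 < c) (hc' : c < 1 / 2) (hne : ¬ (x = 0 ∧ y = 0 ∧ z = 0))
    (h1 : ricciTerm a x y z = ricciTerm b y x z) (h2 : ricciTerm b y x z = ricciTerm c z x y) :
    (0 < x ∧ 0 < y ∧ 0 < z) ∨ (x < 0 ∧ y < 0 ∧ z < 0) := by
  have hneg : ∀ a x y z : ℝ, ricciTerm a (-x) (-y) (-z) = ricciTerm a x y z := by
    intros; unfold ricciTerm; ring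
  have h1' := h1
  have h2' := h2
  rw [← hneg a, ← hneg b] at h1'
  rw [← hneg b, ← hneg c] at h2'
  have hx : x ≠ 0 := fun h => hne ⟨h, coord_ne_zero ha ha' hb hc h1 h2 h⟩
  have hy : y ≠ 0 := fun h => by
    have := coord_ne_zero hb hb' ha hc h1.symm (by rw [h1, h2, ricciTerm_swap]) h
    exact hx this.1
  have hz : z ≠ 0 := fun h => by
    have := coord_ne_zero hc hc' ha hb (by rw [← h2, ← h1, ricciTerm_swap])
      (by rw [ricciTerm_swap, h1, ricciTerm_swap]) h
    exact hx this.1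
  -- each of the three positions can carry the odd sign, for the solution or its negative
  have key : ∀ x y z : ℝ, ricciTerm a x y z = ricciTerm b y x z →
      ricciTerm b y x z = ricciTerm c z x y →
      ¬ (x < 0 ∧ 0 < y ∧ 0 < z) ∧ ¬ (0 < x ∧ y < 0 ∧ 0 < z) ∧ ¬ (0 < x ∧ 0 < y ∧ z < 0) := by
    intro x y z h1 h2
    refine ⟨fun h => ?_, fun h => ?_, fun h => ?_⟩
    · exact not_mixed ha ha' hb hc h.1 h.2.1 h.2.2 h1 h2
    · exact not_mixed hb hb' ha hc h.2.1 h.1 h.2.2 h1.symm (by rw [h1, h2, ricciTerm_swap])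
    · exact not_mixed hc hc' ha hb h.2.2 h.1 h.2.1 (by rw [← h2, ← h1, ricciTerm_swap])
        (by rw [ricciTerm_swap, h1, ricciTerm_swap])
  have k1 := key x y z h1 h2
  have k2 := key (-x) (-y) (-z) h1' h2'
  rw [neg_lt_zero, neg_pos, neg_pos, neg_pos, neg_lt_zero, neg_lt_zero] at k2
  rcases lt_or_gt_of_ne hx with hx | hx <;> rcases lt_or_gt_of_ne hy with hy | hy <;>
    rcases lt_or_gt_of_ne hz with hz | hz <;>
    first
    | exact Or.inl ⟨hx, hy, hz⟩
    | exact Or.inr ⟨hx, hy, hz⟩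
    | exact (k1.1 ⟨hx, hy, hz⟩).elim
    | exact (k1.2.1 ⟨hx, hy, hz⟩).elim
    | exact (k1.2.2 ⟨hx, hy, hz⟩).elim
    | exact (k2.1 ⟨hx, hy, hz⟩).elim
    | exact (k2.2.1 ⟨hx, hy, hz⟩).elim
    | exact (k2.2.2 ⟨hx, hy, hz⟩).elim

/-! ### Counting when two parameters differ -/

/-- The parametrization by `t = z / (y - x)` of the conic `E₁ = E₂`, scaled so that
`y - x = 2 (a + b)`; it is not normalized to coordinate sum `1`. -/
def conicPt (a b t : ℝ) : ℝ × ℝ × ℝ :=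
  (t - (a - b) * t ^ 2 - (a + b), t - (a - b) * t ^ 2 + (a + b), 2 * (a + b) * t)

theorem conicPt_sol {a b c t : ℝ} (ht : quarticF a b c t = 0) :
    ricciTerm a (conicPt a b t).1 (conicPt a b t).2.1 (conicPt a b t).2.2
        = ricciTerm b (conicPt a b t).2.1 (conicPt a b t).1 (conicPt a b t).2.2 ∧
      ricciTerm b (conicPt a b t).2.1 (conicPt a b t).1 (conicPt a b t).2.2
        = ricciTerm c (conicPt a b t).2.2 (conicPt a b t).1 (conicPt a b t).2.1 := by
  unfold quarticF at ht
  simp only [conicPt, ricciTerm]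
  constructor
  · ring
  · linear_combination ht

/-- The sum of the coordinates of `conicPt`. -/
def conicSum (a b t : ℝ) : ℝ :=
  (conicPt a b t).1 + (conicPt a b t).2.1 + (conicPt a b t).2.2

/-- For `a ≠ b`, normalized solutions correspond to the real roots of `quarticF a b c`. -/
theorem normalizedEinstein_eq_image {a b c : ℝ} (ha : 0 < a) (ha' : a < 1 / 2) (hb : 0 < b)
    (hb' : b < 1 / 2) (hc : 0 < c) (hc' : c < 1 / 2) (hab : a ≠ b) :
    normalizedEinstein a b c =
      (fun t => (conicSum a b t)⁻¹ • conicPt a b t) '' {t | quarticF a b c t = 0} ∧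
    Set.InjOn (fun t => (conicSum a b t)⁻¹ • conicPt a b t) {t | quarticF a b c t = 0} := by
  have hs : 0 < a + b := by positivity
  have hsign : ∀ t, quarticF a b c t = 0 →
      (0 < (conicPt a b t).1 ∧ 0 < (conicPt a b t).2.1 ∧ 0 < (conicPt a b t).2.2) ∨
      ((conicPt a b t).1 < 0 ∧ (conicPt a b t).2.1 < 0 ∧ (conicPt a b t).2.2 < 0) := by
    intro t ht
    refine same_sign ha ha' hb hb' hc hc' ?_ (conicPt_sol ht).1 (conicPt_sol ht).2
    rintro ⟨h1, h2, -⟩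
    simp only [conicPt] at h1 h2
    linarith
  have hsum : ∀ t, quarticF a b c t = 0 → conicSum a b t ≠ 0 := by
    intro t ht
    unfold conicSum
    rcases hsign t ht with h | h
    · exact ne_of_gt (by linarith)
    · exact ne_of_lt (by linarith)
  constructor
  · ext ⟨x, y, z⟩
    simp only [normalizedEinstein, Set.mem_ofPred_eq, isEinstein_iff ha hb hc, Set.mem_image]
    constructor
    · rintro ⟨⟨hx, hy, hz, h1, h2⟩, hxyz⟩
      -- `x = y` would force `(a - b) z ^ 2 = 0`
      have hyx : y - x ≠ 0 := by
        intro h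
        have : (a - b) * z ^ 2 = 0 := by
          unfold ricciTerm at h1
          linear_combination -h1 + (z - (a + b) * (x + y)) * h
        rcases mul_eq_zero.1 this with h | h
        · exact hab (sub_eq_zero.1 h)
        · exact hz.ne' (pow_eq_zero_iff two_ne_zero |>.1 h)
      obtain ⟨t, ht⟩ : ∃ t, t = z / (y - x) := ⟨_, rfl⟩
      have hz' : z = t * (y - x) := by rw [ht]; field_simp
      have hxy : (a + b) * (x + y) = (t - (a - b) * t ^ 2) * (y - x) := by
        apply mul_left_cancel₀ hyx
        unfold ricciTerm at h1
        rw [hz'] at h1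
        linear_combination -h1
      obtain ⟨w, hw⟩ : ∃ w, w = (y - x) / (2 * (a + b)) := ⟨_, rfl⟩
      have hw' : y - x = 2 * (a + b) * w := by rw [hw]; field_simp
      have hw0 : w ≠ 0 := by
        rintro rfl
        simp at hw'
        exact hyx hw'
      rw [hw'] at hz' hxy
      have hxy' : x + y = 2 * (t - (a - b) * t ^ 2) * w := by
        apply mul_left_cancel₀ hs.ne'
        linear_combination hxy
      have ex : x = w * (conicPt a b t).1 := by simp only [conicPt]; linarith
      have ey : y = w * (conicPt a b t).2.1 := by simp only [conicPt]; linarith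
      have ez : z = w * (conicPt a b t).2.2 := by simp only [conicPt]; linarith
      have hF : quarticF a b c t = 0 := by
        rw [ex, ey, ez] at h2
        have : w ^ 2 * quarticF a b c t = 0 := by
          simp only [conicPt, ricciTerm] at h2
          unfold quarticF
          linear_combination h2
        exact (mul_eq_zero.1 this).resolve_left (by positivity)
      refine ⟨t, hF, ?_⟩
      have hwS : w * conicSum a b t = 1 := by
        rw [← hxyz, ex, ey, ez]; unfold conicSum; ring
      have hwinv : (conicSum a b t)⁻¹ = w := inv_eq_of_mul_eq_one_left hwS
      rw [hwinv, ex, ey, ez]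
      rfl
    · rintro ⟨t, ht, hxyz⟩
      have hS := hsum t ht
      have ex : x = (conicSum a b t)⁻¹ * (conicPt a b t).1 := (congrArg (·.1) hxyz).symm
      have ey : y = (conicSum a b t)⁻¹ * (conicPt a b t).2.1 := (congrArg (·.2.1) hxyz).symm
      have ez : z = (conicSum a b t)⁻¹ * (conicPt a b t).2.2 := (congrArg (·.2.2) hxyz).symm
      have hpos : 0 < x ∧ 0 < y ∧ 0 < z := by
        rw [ex, ey, ez]
        rcases hsign t ht with ⟨p1, p2, p3⟩ | ⟨p1, p2, p3⟩
        · have : 0 < (conicSum a b t)⁻¹ := inv_pos.2 (by unfold conicSum; linarith)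
          exact ⟨mul_pos this p1, mul_pos this p2, mul_pos this p3⟩
        · have : (conicSum a b t)⁻¹ < 0 := inv_lt_zero.2 (by unfold conicSum; linarith)
          exact ⟨mul_pos_of_neg_of_neg this p1, mul_pos_of_neg_of_neg this p2,
            mul_pos_of_neg_of_neg this p3⟩
      have hscale : ∀ r a x y z : ℝ,
          ricciTerm a (r * x) (r * y) (r * z) = r ^ 2 * ricciTerm a x y z := by
        intros; unfold ricciTerm; ring
      refine ⟨⟨hpos.1, hpos.2.1, hpos.2.2, ?_, ?_⟩, ?_⟩
      · rw [ex, ey, ez, hscale, hscale, (conicPt_sol ht).1]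
      · rw [ex, ey, ez, hscale, hscale, (conicPt_sol ht).2]
      · rw [ex, ey, ez, ← mul_add, ← mul_add]
        exact inv_mul_cancel₀ hS
  · intro t ht t' ht' h
    simp only at h
    have hS := inv_ne_zero (hsum t ht)
    have hS' := inv_ne_zero (hsum t' ht')
    obtain ⟨r, hr⟩ : ∃ r, r = (conicSum a b t)⁻¹ := ⟨_, rfl⟩
    obtain ⟨r', hr'⟩ : ∃ r', r' = (conicSum a b t')⁻¹ := ⟨_, rfl⟩
    rw [← hr, ← hr'] at h
    rw [← hr] at hS
    have e1 : r * (conicPt a b t).1 = r' * (conicPt a b t').1 := congrArg (·.1) h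
    have e2 : r * (conicPt a b t).2.1 = r' * (conicPt a b t').2.1 := congrArg (·.2.1) h
    have e3 : r * (conicPt a b t).2.2 = r' * (conicPt a b t').2.2 := congrArg (·.2.2) h
    simp only [conicPt] at e1 e2 e3
    have er : r = r' := by
      apply mul_left_cancel₀ hs.ne'
      linear_combination (e2 - e1) / 2
    rw [← er] at e3
    apply mul_left_cancel₀ hs.ne'
    apply mul_left_cancel₀ hS
    linear_combination e3 / 2

theorem count_of_ne {a b c : ℝ} (ha : 0 < a) (ha' : a < 1 / 2) (hb : 0 < b)
    (hb' : b < 1 / 2) (hc : 0 < c) (hc' : c < 1 / 2) (hab : a ≠ b) :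
    (Qpoly a b c < 0 → (normalizedEinstein a b c).ncard = 4) ∧
    (0 < Qpoly a b c → (normalizedEinstein a b c).ncard = 2) := by
  obtain ⟨himg, hinj⟩ := normalizedEinstein_eq_image ha ha' hb hb' hc hc' hab
  have hd : 0 < (a - b) ^ 2 := by have := sub_ne_zero.2 hab; positivity
  have hs : 0 < (a + b) ^ 2 := by positivity
  have hr := quartic_roots (A := (2 * c - 1) * (a - b) ^ 2)
    (B := 2 * (a - b) * (1 - 2 * c - (a + b)))
    (C := 2 * (a + b) - 4 * b * (a + b) * (a - b) - 4 * b * (a + b) ^ 2 - 4 * c * (a + b) ^ 2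
        + 2 * c - 1) (D := -2 * (a + b) * (a - b)) (E := (a + b) ^ 2 * (1 + 2 * c))
    (mul_neg_of_neg_of_pos (by linarith) hd) (by positivity)
  rw [quartic_disc_eq] at hr
  have hk : 0 < 16 * (a + b) ^ 4 * (a - b) ^ 2 := by positivity
  rw [himg, hinj.ncard_image]
  refine ⟨fun h => hr.1 ?_, fun h => hr.2 ?_⟩
  · have := mul_neg_of_pos_of_neg hk h
    linarith
  · have := mul_pos hk h
    linarith

/-! ### Cyclic symmetry and equal parameters -/

theorem Qpoly_cyc (a b c : ℝ) : Qpoly b c a = Qpoly a b c := by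
  unfold Qpoly
  simp only
  rw [show b + c + a = a + b + c by ring, show b * c + b * a + c * a = a * b + a * c + b * c by ring,
    show b * c * a = a * b * c by ring]

theorem ncard_cyc {a b c : ℝ} (ha : 0 < a) (hb : 0 < b) (hc : 0 < c) :
    (normalizedEinstein b c a).ncard = (normalizedEinstein a b c).ncard := by
  refine Set.ncard_congr (fun p _ => (p.2.2, p.1, p.2.1)) ?_ ?_ ?_
  · rintro ⟨y, z, x⟩ ⟨h, hsum⟩
    rw [isEinstein_iff hb hc ha] at h
    obtain ⟨hy, hz, hx, h1, h2⟩ := h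
    refine ⟨(isEinstein_iff ha hb hc).2 ⟨hx, hy, hz, ?_, ?_⟩, ?_⟩
    · rw [← h2, ← h1, ricciTerm_swap]
    · rw [ricciTerm_swap, h1, ricciTerm_swap]
    · simp only at hsum ⊢; linarith
  · rintro ⟨y, z, x⟩ ⟨y', z', x'⟩ _ _ h
    simp only [Prod.mk.injEq] at h ⊢
    tauto
  · rintro ⟨x, y, z⟩ ⟨h, hsum⟩
    rw [isEinstein_iff ha hb hc] at h
    obtain ⟨hx, hy, hz, h1, h2⟩ := h
    refine ⟨(y, z, x), ⟨(isEinstein_iff hb hc ha).2 ⟨hy, hz, hx, ?_, ?_⟩, ?_⟩, rfl⟩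
    · simp only
      rw [ricciTerm_swap, h2, ricciTerm_swap]
    · simp only
      rw [ricciTerm_swap, ← h2, ← h1]
    · simp only at hsum ⊢; linarith

theorem Qpoly_diag (a : ℝ) : Qpoly a a a = -((1 + 2 * a) ^ 4 * (1 - 4 * a) ^ 8) := by
  unfold Qpoly; ring

theorem diag_set {a : ℝ} (ha : 0 < a) (ha' : a < 1 / 2) :
    normalizedEinstein a a a = (({(1 / 3, 1 / 3, 1 / 3),
      (2 * a / (1 + 2 * a), 2 * a / (1 + 2 * a), (1 - 2 * a) / (1 + 2 * a)),
      (2 * a / (1 + 2 * a), (1 - 2 * a) / (1 + 2 * a), 2 * a / (1 + 2 * a)),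
      ((1 - 2 * a) / (1 + 2 * a), 2 * a / (1 + 2 * a), 2 * a / (1 + 2 * a))} :
        Finset (ℝ × ℝ × ℝ)) : Set (ℝ × ℝ × ℝ)) := by
  have hp : 0 < 1 + 2 * a := by linarith
  have hm : 0 < 1 - 2 * a := by linarith
  have hu : ∀ u v w : ℝ, u + v + w = 1 → u - 2 * a * (v + w) = 0 → u = 2 * a / (1 + 2 * a) := by
    intro u v w h1 h2
    rw [eq_div_iff hp.ne']
    linear_combination h2 + 2 * a * h1
  have hv : ∀ w : ℝ, w = 1 - 2 * a / (1 + 2 * a) - 2 * a / (1 + 2 * a) →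
      w = (1 - 2 * a) / (1 + 2 * a) := by
    rintro w rfl
    field_simp
    ring
  ext ⟨x, y, z⟩
  simp only [normalizedEinstein, Set.mem_ofPred_eq, isEinstein_iff ha ha ha, Finset.coe_insert,
    Finset.coe_singleton, Set.mem_insert_iff, Set.mem_singleton_iff, Prod.mk.injEq]
  constructor
  · rintro ⟨⟨-, -, -, h1, h2⟩, hsum⟩
    unfold ricciTerm at h1 h2
    have f1 : (y - x) * (z - 2 * a * (x + y)) = 0 := by linear_combination h1
    have f2 : (z - y) * (x - 2 * a * (y + z)) = 0 := by linear_combination h2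
    rcases mul_eq_zero.1 f1 with g1 | g1 <;> rcases mul_eq_zero.1 f2 with g2 | g2
    · left
      refine ⟨?_, ?_, ?_⟩ <;> linarith
    · right; left
      have ex := hu x y z hsum g2
      exact ⟨ex, by linarith, hv z (by linarith)⟩
    · right; right; right
      have ez := hu z x y (by linarith) g1
      exact ⟨hv x (by linarith), by linarith, ez⟩
    · right; right; left
      have ex := hu x y z hsum g2
      have ez := hu z x y (by linarith) g1
      exact ⟨ex, hv y (by linarith), ez⟩
  · have q1 : 0 < 2 * a / (1 + 2 * a) := by positivity
    have q2 : 0 < (1 - 2 * a) / (1 + 2 * a) := by positivity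
    have q3 : (1 - 2 * a) / (1 + 2 * a)
        = 1 - 2 * a / (1 + 2 * a) - 2 * a / (1 + 2 * a) := by field_simp; ring
    have q4 : 2 * a / (1 + 2 * a) - 2 * a * (1 - 2 * a / (1 + 2 * a)) = 0 := by field_simp; ring
    obtain ⟨u, hu⟩ : ∃ u, u = 2 * a / (1 + 2 * a) := ⟨_, rfl⟩
    rw [q3] at q2 ⊢
    rw [← hu] at q1 q2 q4 ⊢
    unfold ricciTerm
    rintro (⟨hx, hy, hz⟩ | ⟨hx, hy, hz⟩ | ⟨hx, hy, hz⟩ | ⟨hx, hy, hz⟩) <;> rw [hx, hy, hz]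
    · norm_num
    · refine ⟨⟨q1, q1, q2, ?_, ?_⟩, by ring⟩
      · ring
      · linear_combination (1 - 3 * u) * q4
    · refine ⟨⟨q1, q2, q1, ?_, ?_⟩, by ring⟩
      · linear_combination (1 - 3 * u) * q4
      · linear_combination (3 * u - 1) * q4
    · refine ⟨⟨q2, q1, q1, ?_, ?_⟩, by ring⟩
      · linear_combination (3 * u - 1) * q4
      · ring

theorem count_diag {a : ℝ} (ha : 0 < a) (ha' : a < 1 / 2) :
    (Qpoly a a a < 0 → (normalizedEinstein a a a).ncard = 4) ∧
    (0 < Qpoly a a a → (normalizedEinstein a a a).ncard = 2) := by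
  constructor
  · intro h
    rw [Qpoly_diag] at h
    have hp : 0 < 1 + 2 * a := by linarith
    have h4 : 1 - 4 * a ≠ 0 := by
      intro h0
      simp [h0] at h
    have e1 : (1 : ℝ) / 3 ≠ 2 * a / (1 + 2 * a) := by
      rw [Ne, div_eq_div_iff (by norm_num) hp.ne']
      intro h; apply h4; linarith
    have e2 : 2 * a / (1 + 2 * a) ≠ (1 - 2 * a) / (1 + 2 * a) := by
      rw [Ne, div_left_inj' hp.ne']
      intro h; apply h4; linarith
    rw [diag_set ha ha', Set.ncard_coe_finset, Finset.card_insert_of_notMem,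
      Finset.card_insert_of_notMem, Finset.card_pair]
    · simp only [Ne, Prod.mk.injEq]; tauto
    · simp only [Finset.mem_insert, Finset.mem_singleton, Prod.mk.injEq]; tauto
    · simp only [Finset.mem_insert, Finset.mem_singleton, Prod.mk.injEq]; tauto
  · intro h
    rw [Qpoly_diag] at h
    have : 0 ≤ (1 + 2 * a) ^ 4 * (1 - 4 * a) ^ 8 := by positivity
    linarith

theorem count_general {a b c : ℝ} (ha : 0 < a) (ha' : a < 1 / 2) (hb : 0 < b)
    (hb' : b < 1 / 2) (hc : 0 < c) (hc' : c < 1 / 2) :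
    (Qpoly a b c < 0 → (normalizedEinstein a b c).ncard = 4) ∧
    (0 < Qpoly a b c → (normalizedEinstein a b c).ncard = 2) := by
  by_cases hab : a = b
  · by_cases hbc : b = c
    · subst hab hbc
      exact count_diag ha ha'
    · rw [← Qpoly_cyc, ← ncard_cyc ha hb hc]
      exact count_of_ne hb hb' hc hc' ha ha' hbc
  · exact count_of_ne ha ha' hb hb' hc hc' hab

theorem stmt5 (k l m : ℕ) (hkl : l ≤ k) (hlm : m ≤ l) (hm : 1 ≤ m) (hl : 2 ≤ l) :
    (Gpoly k l m < 0 → (normalizedEinstein ((k : ℝ) / (2 * ((k : ℝ) + l + m - 2))) ((l : ℝ) / (2 * ((k : ℝ) + l + m - 2))) ((m : ℝ) / (2 * ((k : ℝ) + l + m - 2)))).ncard = 4) ∧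
    (0 < Gpoly k l m → (normalizedEinstein ((k : ℝ) / (2 * ((k : ℝ) + l + m - 2))) ((l : ℝ) / (2 * ((k : ℝ) + l + m - 2))) ((m : ℝ) / (2 * ((k : ℝ) + l + m - 2)))).ncard = 2) := by
  have hkl' : (l : ℝ) ≤ k := by exact_mod_cast hkl
  have hlm' : (m : ℝ) ≤ l := by exact_mod_cast hlm
  have hm' : (1 : ℝ) ≤ m := by exact_mod_cast hm
  have hl' : (2 : ℝ) ≤ l := by exact_mod_cast hl
  have hn : 0 < (k : ℝ) + l + m - 2 := by linarith
  have hn2 : 0 < 2 * ((k : ℝ) + l + m - 2) := by linarith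
  -- each parameter is below `1 / 2` because any two of `k`, `l`, `m` add up to more than `2`
  have hlt : ∀ j : ℝ, j < (k : ℝ) + l + m - 2 → j / (2 * ((k : ℝ) + l + m - 2)) < 1 / 2 := by
    intro j hj
    rw [div_lt_div_iff₀ hn2 (by norm_num)]
    linarith
  have hG : (0 : ℝ) < 2 ^ 12 * ((k : ℝ) + l + m - 2) ^ 12 := by positivity
  have key := count_general (a := (k : ℝ) / (2 * ((k : ℝ) + l + m - 2)))
    (b := (l : ℝ) / (2 * ((k : ℝ) + l + m - 2))) (c := (m : ℝ) / (2 * ((k : ℝ) + l + m - 2)))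
    (div_pos (by linarith) hn2) (hlt _ (by linarith)) (div_pos (by linarith) hn2)
    (hlt _ (by linarith)) (div_pos (by linarith) hn2) (hlt _ (by linarith))
  unfold Gpoly
  exact ⟨fun h => key.1 (neg_of_mul_neg_right h hG.le),
    fun h => key.2 (pos_of_mul_pos_right h hG.le)⟩
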